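/- Completeness of subadditivity and monogamy for four regions: let s = (s_I) ∈ ℝ^{15} be a vector indexed by the nonempty subsets I ⊆ {1,2,3,4}. Extend s to subsets of {1,…,5} by setting ŝ(I) := s(I) if 5 ∉ I, ŝ(I) := s({1,…,5}∖I) if 5 ∈ I and I ≠ {1,…,5}, and ŝ(∅) := 0, ŝ({1,…,5}) := 0. Then s is the holographic entropy vector of some graph model on 4 regions if and only if for all pairwise disjoint nonempty subsets I, J, K ⊆ {1,…,5} one has the subadditivity inequality ŝ(I) + ŝ(J) ≥ ŝ(I∪J) and the monogamy-of-mutual-information inequality ŝ(I∪J) + ŝ(J∪K) + ŝ(I∪K) ≥ ŝ(I) + ŝ(J) + ŝ(K) + ŝ(I∪J∪K). -/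

import Mathlib

open Classical

/-- A *graph model* on `n` regions: a finite graph with symmetric nonnegative edge
weights `w` (weight `0` meaning "no edge") and a partial coloring of the vertices by
the `n+1` boundary colors; `color v = none` means `v` is a bulk vertex, color
`Fin.castSucc i` represents boundary region `i ∈ {1,…,n}` and color `Fin.last n`
represents the purifying region `n+1`. -/
structure GraphModel (n : ℕ) where
  V : Type
  [fintypeV : Fintype V]
  w : V → V → ℝ
  symm : ∀ u v, w u v = w v u
  nonneg : ∀ u v, 0 ≤ w u v
  color : V → Option (Fin (n + 1))

attribute [instance] GraphModel.fintypeV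

/-- `|C(W)|`: the total weight of the edges with exactly one endpoint in `W`
(each unordered crossing edge `{u,v}` is counted exactly once, via its ordering
with `u ∈ W` and `v ∉ W`). -/
noncomputable def GraphModel.cutWeight {n : ℕ} (G : GraphModel n) (W : Set G.V) : ℝ :=
  ∑ u : G.V, ∑ v : G.V, if u ∈ W ∧ v ∉ W then G.w u v else 0

/-- `W` is an `I`-cut: `W` contains precisely the boundary vertices whose color lies
in `I ⊆ {1,…,n}`. -/
def GraphModel.IsCut {n : ℕ} (G : GraphModel n) (I : Finset (Fin n)) (W : Set G.V) : Prop :=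
  ∀ v c, G.color v = some c → (v ∈ W ↔ ∃ i ∈ I, Fin.castSucc i = c)

/-- The discrete entropy `S*(I)`: the minimal weight of an `I`-cut. -/
noncomputable def GraphModel.entropy {n : ℕ} (G : GraphModel n) (I : Finset (Fin n)) : ℝ :=
  sInf (G.cutWeight '' {W | G.IsCut I W})

/-- The holographic entropy vector of a graph model: the collection of all discrete
entropies `S*(I)` of nonempty subsets `I ⊆ {1,…,n}`. -/
noncomputable def GraphModel.entropyVector {n : ℕ} (G : GraphModel n)
    (I : {I : Finset (Fin n) // I.Nonempty}) : ℝ :=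
  G.entropy I.1

/-- restriction of a subset of `{1,…,5}` not containing `5` to a subset of `{1,…,4}` -/
def down (I : Finset (Fin 5)) : Finset (Fin 4) :=
  Finset.univ.filter fun j => Fin.castSucc j ∈ I

/-- extension of `s` to possibly-empty index sets, with value `0` on `∅` -/
noncomputable def sbar (s : {I : Finset (Fin 4) // I.Nonempty} → ℝ)
    (J : Finset (Fin 4)) : ℝ :=
  if h : J.Nonempty then s ⟨J, h⟩ else 0

/-- the purified extension `ŝ` of `s` to subsets of `{1,…,5}`:
`ŝ(I) = s(I)` if `5 ∉ I`, `ŝ(I) = s({1,…,5}∖I)` if `5 ∈ I ≠ {1,…,5}`, and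
`ŝ(∅) = ŝ({1,…,5}) = 0`. -/
noncomputable def extend (s : {I : Finset (Fin 4) // I.Nonempty} → ℝ)
    (I : Finset (Fin 5)) : ℝ :=
  if I = Finset.univ then 0
  else if (4 : Fin 5) ∈ I then sbar s (down Iᶜ)
  else sbar s (down I)

section

open Finset

namespace GraphModel

variable {n : ℕ} (G : GraphModel n)

/-- `W` contains precisely the boundary vertices whose color lies in the set `I` of colors,
where `I` may contain the purifying color. -/
def IsColorCut (I : Finset (Fin (n + 1))) (W : Set G.V) : Prop :=
  ∀ v c, G.color v = some c → (v ∈ W ↔ c ∈ I)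

/-- The minimal weight of a cut separating the colors in `I` from the remaining ones. -/
noncomputable def colorEntropy (I : Finset (Fin (n + 1))) : ℝ :=
  sInf (G.cutWeight '' {W | G.IsColorCut I W})

lemma isCut_iff_isColorCut_map (I : Finset (Fin n)) (W : Set G.V) :
    G.IsCut I W ↔ G.IsColorCut (I.map Fin.castSuccEmb) W := by
  simp [IsCut, IsColorCut]

lemma entropy_eq_colorEntropy_map (I : Finset (Fin n)) :
    G.entropy I = G.colorEntropy (I.map Fin.castSuccEmb) := by
  simp only [entropy, colorEntropy, isCut_iff_isColorCut_map]

lemma cutWeight_nonneg (W : Set G.V) : 0 ≤ G.cutWeight W :=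
  sum_nonneg fun u _ => sum_nonneg fun v _ => by
    split_ifs
    exacts [G.nonneg u v, le_rfl]

lemma cutWeight_compl (W : Set G.V) : G.cutWeight Wᶜ = G.cutWeight W := by
  unfold cutWeight
  rw [sum_comm]
  refine sum_congr rfl fun u _ => sum_congr rfl fun v _ => ?_
  rw [G.symm v u]
  congr 1
  simp [and_comm]

lemma two_mul_cutWeight (W : Set G.V) :
    2 * G.cutWeight W = ∑ u : G.V, ∑ v : G.V, if ¬(u ∈ W ↔ v ∈ W) then G.w u v else 0 := by
  rw [two_mul]
  nth_rewrite 2 [← cutWeight_compl]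
  simp only [cutWeight, ← sum_add_distrib]
  refine sum_congr rfl fun u _ => sum_congr rfl fun v _ => ?_
  by_cases hu : u ∈ W <;> by_cases hv : v ∈ W <;> simp [hu, hv]

variable {G}

lemma IsColorCut.compl {I : Finset (Fin (n + 1))} {W : Set G.V} (h : G.IsColorCut I W) :
    G.IsColorCut Iᶜ Wᶜ := fun v c hc => by simp [h v c hc]

lemma colorEntropy_le {I : Finset (Fin (n + 1))} {W : Set G.V} (h : G.IsColorCut I W) :
    G.colorEntropy I ≤ G.cutWeight W :=
  csInf_le ⟨0, by rintro _ ⟨U, -, rfl⟩; exact G.cutWeight_nonneg U⟩ ⟨W, h, rfl⟩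

variable (G)

lemma exists_cutWeight_eq_colorEntropy (I : Finset (Fin (n + 1))) :
    ∃ W, G.IsColorCut I W ∧ G.cutWeight W = G.colorEntropy I := by
  have hne : (G.cutWeight '' {W | G.IsColorCut I W}).Nonempty :=
    ⟨_, {v | ∃ c ∈ I, G.color v = some c}, fun v c hc => by simp [hc], rfl⟩
  obtain ⟨W, hW, h⟩ := hne.csInf_mem (Set.toFinite _)
  exact ⟨W, hW, h⟩

lemma colorEntropy_empty : G.colorEntropy ∅ = 0 := by
  refine le_antisymm ?_ ?_
  · have h : G.IsColorCut ∅ ∅ := fun v c _ => by simp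
    simpa [cutWeight] using colorEntropy_le h
  · obtain ⟨W, -, h⟩ := G.exists_cutWeight_eq_colorEntropy ∅
    exact h ▸ G.cutWeight_nonneg W

lemma colorEntropy_compl (I : Finset (Fin (n + 1))) :
    G.colorEntropy Iᶜ = G.colorEntropy I := by
  have key : ∀ J : Finset (Fin (n + 1)), G.colorEntropy Jᶜ ≤ G.colorEntropy J := fun J => by
    obtain ⟨W, hW, h⟩ := G.exists_cutWeight_eq_colorEntropy J
    rw [← h, ← cutWeight_compl]
    exact colorEntropy_le hW.compl
  exact le_antisymm (key I) (by simpa using key Iᶜ)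

lemma colorEntropy_union_le (I J : Finset (Fin (n + 1))) :
    G.colorEntropy (I ∪ J) ≤ G.colorEntropy I + G.colorEntropy J := by
  obtain ⟨A, hA, hA'⟩ := G.exists_cutWeight_eq_colorEntropy I
  obtain ⟨B, hB, hB'⟩ := G.exists_cutWeight_eq_colorEntropy J
  have hAB : G.IsColorCut (I ∪ J) (A ∪ B) := fun v c hc => by simp [hA v c hc, hB v c hc]
  refine (colorEntropy_le hAB).trans ?_
  rw [← hA', ← hB']
  simp only [cutWeight, ← sum_add_distrib]
  refine sum_le_sum fun u _ => sum_le_sum fun v _ => ?_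
  have := G.nonneg u v
  by_cases u ∈ A <;> by_cases u ∈ B <;> by_cases v ∈ A <;> by_cases v ∈ B <;> simp [*]

lemma colorEntropy_monogamy {I J K : Finset (Fin (n + 1))}
    (hIJ : Disjoint I J) (hJK : Disjoint J K) (hIK : Disjoint I K) :
    G.colorEntropy I + G.colorEntropy J + G.colorEntropy K + G.colorEntropy (I ∪ J ∪ K) ≤
      G.colorEntropy (I ∪ J) + G.colorEntropy (J ∪ K) + G.colorEntropy (I ∪ K) := by
  obtain ⟨A, hA, hA'⟩ := G.exists_cutWeight_eq_colorEntropy (I ∪ J)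
  obtain ⟨B, hB, hB'⟩ := G.exists_cutWeight_eq_colorEntropy (J ∪ K)
  obtain ⟨C, hC, hC'⟩ := G.exists_cutWeight_eq_colorEntropy (I ∪ K)
  rw [Finset.disjoint_left] at hIJ hJK hIK
  have cutI : G.IsColorCut I ((A ∩ C) \ B) := fun v c hc => by
    have := @hIJ c; have := @hIK c
    simp only [Set.mem_sdiff, Set.mem_inter_iff, hA v c hc, hB v c hc, hC v c hc, mem_union]
    tauto
  have cutJ : G.IsColorCut J ((A ∩ B) \ C) := fun v c hc => by
    have := @hIJ c; have := @hJK c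
    simp only [Set.mem_sdiff, Set.mem_inter_iff, hA v c hc, hB v c hc, hC v c hc, mem_union]
    tauto
  have cutK : G.IsColorCut K ((B ∩ C) \ A) := fun v c hc => by
    have := @hIK c; have := @hJK c
    simp only [Set.mem_sdiff, Set.mem_inter_iff, hA v c hc, hB v c hc, hC v c hc, mem_union]
    tauto
  have cutU : G.IsColorCut (I ∪ J ∪ K) (A ∪ B ∪ C) := fun v c hc => by
    simp only [Set.mem_union, hA v c hc, hB v c hc, hC v c hc, mem_union]
    tauto
  have key : 2 * G.cutWeight ((A ∩ C) \ B) + 2 * G.cutWeight ((A ∩ B) \ C) +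
      2 * G.cutWeight ((B ∩ C) \ A) + 2 * G.cutWeight (A ∪ B ∪ C) ≤
      2 * G.cutWeight A + 2 * G.cutWeight B + 2 * G.cutWeight C := by
    simp only [two_mul_cutWeight, ← sum_add_distrib]
    refine sum_le_sum fun u _ => sum_le_sum fun v _ => ?_
    have := G.nonneg u v
    by_cases u ∈ A <;> by_cases u ∈ B <;> by_cases u ∈ C <;>
      by_cases v ∈ A <;> by_cases v ∈ B <;> by_cases v ∈ C <;> simp [*]
  linarith [colorEntropy_le cutI, colorEntropy_le cutJ, colorEntropy_le cutK,
    colorEntropy_le cutU]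

/-- The graph with one boundary vertex of each color, edges `b i j` between boundary vertices,
and for each `k : K` a bulk vertex joined to the boundary vertex `i` with weight `y k * d k i`. -/
def ofStars {K : Type} [Fintype K] (b : Fin (n + 1) → Fin (n + 1) → ℝ)
    (b_symm : ∀ i j, b i j = b j i) (b_nonneg : ∀ i j, 0 ≤ b i j)
    (y : K → ℝ) (y_nonneg : ∀ k, 0 ≤ y k) (d : K → Fin (n + 1) → ℕ) : GraphModel n where
  V := Fin (n + 1) ⊕ K
  w := Sum.elim (fun i => Sum.elim (b i) fun k => y k * d k i)
    fun k => Sum.elim (fun i => y k * d k i) fun _ => 0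
  symm := by rintro (i | k) (j | l) <;> simp [b_symm]
  nonneg := by
    rintro (i | k) (j | l)
    · exact b_nonneg i j
    · exact mul_nonneg (y_nonneg l) (Nat.cast_nonneg _)
    · exact mul_nonneg (y_nonneg k) (Nat.cast_nonneg _)
    · exact le_rfl
  color := Sum.elim some fun _ => none

section ofStars

variable {K : Type} [Fintype K] {b : Fin (n + 1) → Fin (n + 1) → ℝ}
  (b_symm : ∀ i j, b i j = b j i) (b_nonneg : ∀ i j, 0 ≤ b i j)
  {y : K → ℝ} (y_nonneg : ∀ k, 0 ≤ y k) (d : K → Fin (n + 1) → ℕ)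

lemma ofStars_isColorCut_iff (I : Finset (Fin (n + 1))) (W : Set (Fin (n + 1) ⊕ K)) :
    (ofStars b b_symm b_nonneg y y_nonneg d).IsColorCut I W ↔ ∀ i, Sum.inl i ∈ W ↔ i ∈ I := by
  constructor
  · exact fun h i => h (Sum.inl i) i rfl
  · rintro h (i | k) c hc
    · obtain rfl : i = c := Option.some_injective _ hc
      exact h i
    · cases hc

lemma ofStars_cutWeight (I : Finset (Fin (n + 1))) (W : Set (Fin (n + 1) ⊕ K))
    (hW : ∀ i, Sum.inl i ∈ W ↔ i ∈ I) :
    (ofStars b b_symm b_nonneg y y_nonneg d).cutWeight W =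
      (∑ i ∈ I, ∑ j ∈ Iᶜ, b i j) +
        ∑ k, y k * ((if Sum.inr k ∈ W then ∑ i ∈ Iᶜ, d k i else ∑ i ∈ I, d k i : ℕ) : ℝ) := by
  change (∑ u : Fin (n + 1) ⊕ K, ∑ v : Fin (n + 1) ⊕ K, if u ∈ W ∧ v ∉ W then
    Sum.elim (fun i => Sum.elim (b i) fun k => y k * d k i)
      (fun k => Sum.elim (fun i => y k * d k i) fun _ => 0) u v else 0) = _
  simp only [Fintype.sum_sum_type, hW, Sum.elim_inl, Sum.elim_inr, sum_add_distrib, ite_self,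
    sum_const_zero, add_zero]
  have hboundary : (∑ i, ∑ j, if i ∈ I ∧ j ∉ I then b i j else 0) = ∑ i ∈ I, ∑ j ∈ Iᶜ, b i j := by
    rw [← sum_subset (subset_univ I) fun i _ hi => by simp [hi]]
    refine sum_congr rfl fun i hi => ?_
    rw [← sum_subset (subset_univ Iᶜ) fun j _ hj => by simp_all]
    exact sum_congr rfl fun j hj => if_pos ⟨hi, mem_compl.1 hj⟩
  rw [hboundary, add_assoc, sum_comm (γ := Fin (n + 1)) (α := K), ← sum_add_distrib]
  congr 1
  refine sum_congr rfl fun k _ => ?_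
  by_cases hk : Sum.inr k ∈ W
  · simp [hk, mul_sub, mul_sum, sum_ite, compl_eq_univ_sdiff, filter_not]
  · simp [hk, mul_sum]

lemma ofStars_colorEntropy (I : Finset (Fin (n + 1))) :
    (ofStars b b_symm b_nonneg y y_nonneg d).colorEntropy I =
      (∑ i ∈ I, ∑ j ∈ Iᶜ, b i j) +
        ∑ k, y k * (min (∑ i ∈ I, d k i) (∑ i ∈ Iᶜ, d k i) : ℕ) := by
  refine le_antisymm ?_ ?_
  · let W : Set (Fin (n + 1) ⊕ K) := {v | Sum.elim (· ∈ I)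
      (fun k => ∑ i ∈ Iᶜ, d k i < ∑ i ∈ I, d k i) v}
    have hW : ∀ i, Sum.inl i ∈ W ↔ i ∈ I := fun i => Iff.rfl
    refine (colorEntropy_le ((ofStars_isColorCut_iff b_symm b_nonneg y_nonneg d I W).2 hW)).trans
      (le_of_eq ?_)
    have hW' : ∀ k, Sum.inr k ∈ W ↔ ∑ i ∈ Iᶜ, d k i < ∑ i ∈ I, d k i := fun k => Iff.rfl
    rw [ofStars_cutWeight b_symm b_nonneg y_nonneg d I W hW]
    simp only [hW']
    congr 1
    refine sum_congr rfl fun k _ => ?_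
    congr 2
    by_cases h : ∑ i ∈ Iᶜ, d k i < ∑ i ∈ I, d k i
    · rw [if_pos h, min_eq_right h.le]
    · rw [if_neg h, min_eq_left (not_lt.1 h)]
  · obtain ⟨W, hW, h⟩ :=
      (ofStars b b_symm b_nonneg y y_nonneg d).exists_cutWeight_eq_colorEntropy I
    rw [← h, ofStars_cutWeight b_symm b_nonneg y_nonneg d I W
      ((ofStars_isColorCut_iff b_symm b_nonneg y_nonneg d I W).1 hW)]
    gcongr with k
    · exact y_nonneg k
    · split_ifs
      exacts [min_le_right _ _, min_le_left _ _]

end ofStars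

end GraphModel

section extend

variable (s : {I : Finset (Fin 4) // I.Nonempty} → ℝ)

lemma extend_empty : extend s ∅ = 0 := by
  have h : (∅ : Finset (Fin 5)) ≠ univ := by decide
  simp [extend, h, sbar, down]

lemma extend_compl (I : Finset (Fin 5)) : extend s Iᶜ = extend s I := by
  rcases eq_or_ne I univ with rfl | h
  · rw [compl_univ, extend_empty]
    simp [extend]
  rcases eq_or_ne I ∅ with rfl | h'
  · rw [compl_empty, extend_empty]
    simp [extend]
  by_cases h4 : (4 : Fin 5) ∈ I <;> simp [extend, h, h', h4, compl_eq_univ_iff]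

lemma extend_map (I : {I : Finset (Fin 4) // I.Nonempty}) :
    extend s (I.1.map Fin.castSuccEmb) = s I := by
  have h4 : (4 : Fin 5) ∉ I.1.map Fin.castSuccEmb := by
    simp only [mem_map, Fin.coe_castSuccEmb, not_exists, not_and]
    exact fun i _ => (Fin.castSucc_lt_last i).ne
  have hne : I.1.map Fin.castSuccEmb ≠ univ := fun h => h4 (h ▸ mem_univ _)
  have hd : down (I.1.map Fin.castSuccEmb) = I.1 := by
    ext j
    simp [down]
  rw [extend, if_neg hne, if_neg h4, hd, sbar, dif_pos I.2]

lemma extend_entropyVector (G : GraphModel 4) (I : Finset (Fin 5)) :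
    extend G.entropyVector I = G.colorEntropy I := by
  have key : ∀ J : Finset (Fin 5), (4 : Fin 5) ∉ J →
      extend G.entropyVector J = G.colorEntropy J := by
    intro J hJ
    have hmap : (down J).map Fin.castSuccEmb = J := by
      revert J
      decide
    rcases (down J).eq_empty_or_nonempty with h | h
    · rw [← hmap, h, map_empty, extend_empty, G.colorEntropy_empty]
    · rw [← hmap, extend_map _ ⟨down J, h⟩]
      exact G.entropy_eq_colorEntropy_map _
  by_cases h : (4 : Fin 5) ∈ I
  · rw [← extend_compl, ← G.colorEntropy_compl, key _ (by simpa using h)]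
  · exact key I h

end extend

section realization

lemma exists_compl_pair_eq {i j : Fin 5} (hij : i ≠ j) :
    ∃ k l m : Fin 5, [i, j, k, l, m].Nodup ∧ ({i, j}ᶜ : Finset (Fin 5)) = {k, l, m} ∧
      ({i}ᶜ : Finset (Fin 5)) = {j, k, l, m} ∧ univ = {i, j, k, l, m} := by
  revert i j
  decide

lemma exists_eq_pair_or_compl_eq_pair (I : Finset (Fin 5)) :
    I = ∅ ∨ Iᶜ = ∅ ∨ ∃ i j, I = {i, j} ∨ Iᶜ = {i, j} := by
  revert I
  decide

/-- If the sums of any two distinct entries of `x` are nonnegative, then at most one entry is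
negative, which bounds the total negative part. -/
lemma sum_negPart_le {ι : Type*} [Fintype ι] {x : ι → ℝ} (hx : ∀ i j, i ≠ j → 0 ≤ x i + x j)
    (i : ι) : ∑ j, max 0 (-x j) ≤ x i + 2 * max 0 (-x i) := by
  by_cases h : ∃ j, x j < 0
  · obtain ⟨j, hj⟩ := h
    rw [sum_eq_single j (fun l _ hl => max_eq_left (by linarith [hx l j hl])) (by simp),
      max_eq_right (by linarith)]
    rcases eq_or_ne i j with rfl | hij
    · rw [max_eq_right (by linarith)]
      linarith
    · linarith [hx i j hij, le_max_left 0 (-x i)]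
  · push Not at h
    rw [sum_eq_zero fun j _ => max_eq_left (by linarith [h j])]
    linarith [h i, le_max_left 0 (-x i)]

/-- A function on subsets of five colors that is invariant under complements and satisfies
subadditivity and monogamy is realized by a superposition of edges, stars with four unit legs
and stars with five legs, one of which has weight two. -/
theorem exists_colorEntropy_eq {t : Finset (Fin 5) → ℝ} (t_empty : t ∅ = 0)
    (t_compl : ∀ I, t Iᶜ = t I)
    (t_union : ∀ I J : Finset (Fin 5), I.Nonempty → J.Nonempty → Disjoint I J →
      t (I ∪ J) ≤ t I + t J)
    (t_monogamy : ∀ I J K : Finset (Fin 5), I.Nonempty → J.Nonempty → K.Nonempty →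
      Disjoint I J → Disjoint J K → Disjoint I K →
      t I + t J + t K + t (I ∪ J ∪ K) ≤ t (I ∪ J) + t (J ∪ K) + t (I ∪ K)) :
    ∃ G : GraphModel 4, ∀ I, G.colorEntropy I = t I := by
  have t_pair : ∀ i j, i ≠ j → t {i, j} ≤ t {i} + t {j} := fun i j h =>
    t_union {i} {j} (by simp) (by simp) (by simpa using h)
  let b : Fin 5 → Fin 5 → ℝ := fun i j => if i = j then 0 else (t {i} + t {j} - t {i, j}) / 2
  let x : Fin 5 → ℝ := fun i => t {i} - (∑ j, t {i, j}) / 2 + (∑ j, ∑ k, t {j, k}) / 8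
    - 3 * (∑ j, t {j}) / 8
  let y : Fin 5 ⊕ Fin 5 → ℝ := Sum.elim
    (fun k => x k + 2 * max 0 (-x k) - ∑ j, max 0 (-x j)) (fun k => 2 * max 0 (-x k))
  let d : Fin 5 ⊕ Fin 5 → Fin 5 → ℕ := Sum.elim
    (fun k i => if i = k then 0 else 1) (fun k i => if i = k then 2 else 1)
  have b_symm : ∀ i j, b i j = b j i := fun i j => by
    simp only [b, eq_comm (a := i), pair_comm i j, add_comm (t {i})]
  have b_nonneg : ∀ i j, 0 ≤ b i j := fun i j => by
    by_cases h : i = j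
    · simp [b, h]
    · simp only [b, if_neg h]
      linarith [t_pair i j h]
  have x_nonneg : ∀ i j, i ≠ j → 0 ≤ x i + x j := by
    intro i j hij
    obtain ⟨k, l, m, hnd, hc, -, huniv⟩ := exists_compl_pair_eq hij
    simp only [List.nodup_cons, List.mem_cons, List.not_mem_nil, not_or, or_false] at hnd
    obtain ⟨⟨-, hik, hil, him⟩, ⟨hjk, hjl, hjm⟩, ⟨hkl, hkm⟩, hlm, -⟩ := hnd
    have hm := t_monogamy {k} {l} {m} (by simp) (by simp) (by simp) (by simpa using hkl)
      (by simpa using hlm) (by simpa using hkm)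
    rw [union_assoc] at hm
    simp only [← insert_eq] at hm
    rw [← hc, t_compl] at hm
    have hsum : ∀ f : Fin 5 → ℝ, ∑ v, f v = f i + (f j + (f k + (f l + f m))) := fun f => by
      rw [huniv]
      simp [*]
    simp only [x, hsum, pair_eq_singleton, pair_comm j i, pair_comm k i, pair_comm l i,
      pair_comm m i, pair_comm k j, pair_comm l j, pair_comm m j, pair_comm l k, pair_comm m k,
      pair_comm m l]
    linarith
  have y_nonneg : ∀ k, 0 ≤ y k := by
    rintro (k | k)
    · simpa [y] using sum_negPart_le x_nonneg k
    · simp [y]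
  refine ⟨GraphModel.ofStars b b_symm b_nonneg y y_nonneg d, fun I => ?_⟩
  have key : ∀ i j, i ≠ j →
      (GraphModel.ofStars b b_symm b_nonneg y y_nonneg d).colorEntropy {i} = t {i} ∧
      (GraphModel.ofStars b b_symm b_nonneg y y_nonneg d).colorEntropy {i, j} = t {i, j} := by
    intro i j hij
    obtain ⟨k, l, m, hnd, hc, hc', huniv⟩ := exists_compl_pair_eq hij
    simp only [List.nodup_cons, List.mem_cons, List.not_mem_nil, not_or, or_false] at hnd
    obtain ⟨⟨-, hik, hil, him⟩, ⟨hjk, hjl, hjm⟩, ⟨hkl, hkm⟩, hlm, -⟩ := hnd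
    have hsum : ∀ f : Fin 5 → ℝ, ∑ v, f v = f i + (f j + (f k + (f l + f m))) := fun f => by
      rw [huniv]
      simp [*]
    rw [GraphModel.ofStars_colorEntropy, GraphModel.ofStars_colorEntropy, hc, hc']
    simp only [Fintype.sum_sum_type, hsum, y, d, b, Sum.elim_inl, Sum.elim_inr]
    simp [hij, hik, hil, him, hjk, hjl, hjm, hkl, hkm, hlm, hij.symm, Ne.symm hik, Ne.symm hil,
      Ne.symm him, Ne.symm hjk, Ne.symm hjl, Ne.symm hjm, Ne.symm hkl, Ne.symm hkm, Ne.symm hlm]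
    simp only [x, hsum, pair_eq_singleton, pair_comm j i, pair_comm k i, pair_comm l i,
      pair_comm m i, pair_comm k j, pair_comm l j, pair_comm m j, pair_comm l k, pair_comm m k,
      pair_comm m l]
    constructor <;> ring
  have key' : ∀ i j,
      (GraphModel.ofStars b b_symm b_nonneg y y_nonneg d).colorEntropy {i, j} = t {i, j} := by
    intro i j
    rcases eq_or_ne i j with rfl | h
    · obtain ⟨j, hj⟩ := exists_ne i
      simpa using (key i j hj.symm).1
    · exact (key i j h).2
  rcases exists_eq_pair_or_compl_eq_pair I with h | h | ⟨i, j, h | h⟩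
  · rw [h, t_empty, GraphModel.colorEntropy_empty]
  · rw [← t_compl, ← GraphModel.colorEntropy_compl, h, t_empty, GraphModel.colorEntropy_empty]
  · rw [h, key']
  · rw [← t_compl, ← GraphModel.colorEntropy_compl, h, key']

end realization

end

/-- Completeness of subadditivity and monogamy for four regions:
`s` is the holographic entropy vector of some graph model on 4 regions iff the
purified extension `ŝ` satisfies subadditivity for all disjoint nonempty
`I, J ⊆ {1,…,5}` and monogamy of mutual information for all pairwise disjoint
nonempty `I, J, K ⊆ {1,…,5}`. -/
theorem stmt7 (s : {I : Finset (Fin 4) // I.Nonempty} → ℝ) :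
    (∃ G : GraphModel 4, G.entropyVector = s) ↔
      ((∀ I J : Finset (Fin 5), I.Nonempty → J.Nonempty → Disjoint I J →
          extend s I + extend s J ≥ extend s (I ∪ J)) ∧
        (∀ I J K : Finset (Fin 5), I.Nonempty → J.Nonempty → K.Nonempty →
          Disjoint I J → Disjoint J K → Disjoint I K →
          extend s (I ∪ J) + extend s (J ∪ K) + extend s (I ∪ K) ≥
            extend s I + extend s J + extend s K + extend s (I ∪ J ∪ K))) := by
  constructor
  · rintro ⟨G, rfl⟩
    simp only [extend_entropyVector]
    exact ⟨fun I J _ _ _ => G.colorEntropy_union_le I J,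
      fun I J K _ _ _ hIJ hJK hIK => G.colorEntropy_monogamy hIJ hJK hIK⟩
  · rintro ⟨hSA, hMMI⟩
    obtain ⟨G, hG⟩ := exists_colorEntropy_eq (extend_empty s) (extend_compl s) hSA hMMI
    refine ⟨G, funext fun I => ?_⟩
    rw [← extend_map s I, ← hG]
    exact G.entropy_eq_colorEntropy_map I.1
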